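/- arXiv:2311.16285 — 4 statements merged into one kernel-verified Lean document; each statement's English description precedes it below -/
import Mathlib

section
/- There exists a constant C > 0 such that for every L > 0, every β ∈ ℝ, and every strictly positive L-periodic function v ∈ C²(ℝ), one has ∫₀^L v(x)^β (v''(x))² dx ≥ C (1 − β)² ∫₀^L v(x)^{β−2} (v'(x))⁴ dx. -/
/-!
Integrating the derivative of `v ^ (β - 1) * v' ^ 3` shows that, up to boundary terms,
`3 ∫ v ^ (β - 1) * v' ^ 2 * v'' = (1 - β) ∫ v ^ (β - 2) * v' ^ 4`. Substituting this into
`0 ≤ ∫ v ^ (β - 2) * (v * v'' + c * v' ^ 2) ^ 2` bounds `∫ v ^ β * v'' ^ 2` from below by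
`(2 c (β - 1) / 3 - c ^ 2) ∫ v ^ (β - 2) * v' ^ 4`; the best choice `c = (β - 1) / 3` gives the
constant `(1 - β) ^ 2 / 9`. The boundary terms cancel for periodic `v`.
-/

open Set intervalIntegral
open MeasureTheory (volume)
open scoped Interval

theorem rpow_sub_two_mul_sq_add {y : ℝ} (hy : y ≠ 0) (β c z w : ℝ) :
    y ^ (β - 2) * (y * z + c * w ^ 2) ^ 2 =
      y ^ β * z ^ 2 + 2 * c * (y ^ (β - 1) * w ^ 2 * z) + c ^ 2 * (y ^ (β - 2) * w ^ 4) := by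
  have rpow_sub_one : y ^ (β - 1) = y ^ (β - 2) * y := by
    rw [← Real.rpow_add_one hy]
    ring_nf
  have rpow_self : y ^ β = y ^ (β - 2) * y ^ 2 := by
    rw [← Real.rpow_add_natCast hy]
    norm_num
  rw [rpow_sub_one, rpow_self]
  ring

theorem periodic_deriv {𝕜 F : Type*} [NontriviallyNormedField 𝕜] [NormedAddCommGroup F]
    [NormedSpace 𝕜 F] {f : 𝕜 → F} {c : 𝕜} (hf : Function.Periodic f c) :
    Function.Periodic (deriv f) c := fun x ↦ by
  rw [← deriv_comp_add_const, hf.funext]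

section

variable {a b : ℝ} {v v' v'' w z : ℝ → ℝ}

theorem integral_rpow_mul_sq_add (hv : ContinuousOn v [[a, b]]) (hw : ContinuousOn w [[a, b]])
    (hz : ContinuousOn z [[a, b]]) (hv_ne : ∀ x ∈ [[a, b]], v x ≠ 0) (β c : ℝ) :
    ∫ x in a..b, v x ^ (β - 2) * (v x * z x + c * w x ^ 2) ^ 2 =
      (∫ x in a..b, v x ^ β * z x ^ 2) +
        2 * c * (∫ x in a..b, v x ^ (β - 1) * w x ^ 2 * z x) +
        c ^ 2 * ∫ x in a..b, v x ^ (β - 2) * w x ^ 4 := by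
  have hpow (p : ℝ) : ContinuousOn (fun x ↦ v x ^ p) [[a, b]] :=
    hv.rpow_const fun x hx ↦ .inl (hv_ne x hx)
  have hJ : IntervalIntegrable (fun x ↦ v x ^ β * z x ^ 2) volume a b :=
    ((hpow β).mul (hz.pow 2)).intervalIntegrable
  have hK : IntervalIntegrable (fun x ↦ v x ^ (β - 1) * w x ^ 2 * z x) volume a b :=
    (((hpow _).mul (hw.pow 2)).mul hz).intervalIntegrable
  have hI : IntervalIntegrable (fun x ↦ v x ^ (β - 2) * w x ^ 4) volume a b :=
    ((hpow _).mul (hw.pow 4)).intervalIntegrable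
  rw [integral_congr fun x hx ↦ rpow_sub_two_mul_sq_add (hv_ne x hx) β c (z x) (w x),
    integral_add (hJ.add (hK.const_mul _)) (hI.const_mul _), integral_add hJ (hK.const_mul _),
    integral_const_mul, integral_const_mul]

theorem integral_deriv_rpow_mul_deriv_pow
    (hv : ∀ x ∈ [[a, b]], HasDerivWithinAt v (v' x) [[a, b]] x)
    (hv' : ∀ x ∈ [[a, b]], HasDerivWithinAt v' (v'' x) [[a, b]] x)
    (hv'' : IntervalIntegrable v'' volume a b) (hv_ne : ∀ x ∈ [[a, b]], v x ≠ 0) (p : ℝ) (n : ℕ) :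
    p * (∫ x in a..b, v x ^ (p - 1) * v' x ^ (n + 1)) +
        n * (∫ x in a..b, v x ^ p * v' x ^ (n - 1) * v'' x) =
      v b ^ p * v' b ^ n - v a ^ p * v' a ^ n := by
  have hv'_cont : ContinuousOn v' [[a, b]] := fun x hx ↦ (hv' x hx).continuousWithinAt
  have hpow (p : ℝ) : ContinuousOn (fun x ↦ v x ^ p) [[a, b]] := fun x hx ↦
    (hv x hx).continuousWithinAt.rpow_const (.inl <| hv_ne x hx)
  have hint : IntervalIntegrable (fun x ↦ v x ^ (p - 1) * v' x ^ (n + 1)) volume a b :=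
    ((hpow _).mul (hv'_cont.pow _)).intervalIntegrable
  have hint' : IntervalIntegrable (fun x ↦ v x ^ p * v' x ^ (n - 1) * v'' x) volume a b :=
    hv''.continuousOn_mul ((hpow p).mul (hv'_cont.pow _))
  rw [← integral_deriv_mul_eq_sub_of_hasDerivWithinAt
      (fun x hx ↦ (hv x hx).rpow_const (p := p) (.inl <| hv_ne x hx))
      (fun x hx ↦ (hv' x hx).fun_pow n)
      ((hv'_cont.mul_const p).mul (hpow _)).intervalIntegrable
      (hv''.continuousOn_mul (continuousOn_const.mul (hv'_cont.pow _))),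
    ← integral_const_mul, ← integral_const_mul,
    ← integral_add (hint.const_mul p) (hint'.const_mul n)]
  refine integral_congr fun x _ ↦ ?_
  ring

theorem stmt_3_general (hab : a ≤ b)
    (hv : ∀ x ∈ Icc a b, HasDerivWithinAt v (v' x) (Icc a b) x)
    (hv' : ∀ x ∈ Icc a b, HasDerivWithinAt v' (v'' x) (Icc a b) x)
    (hv'' : ContinuousOn v'' (Icc a b)) (hpos : ∀ x ∈ Icc a b, 0 < v x) (β : ℝ) :
    1 / 9 * (1 - β) ^ 2 * ∫ x in a..b, v x ^ (β - 2) * v' x ^ 4 ≤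
      (∫ x in a..b, v x ^ β * v'' x ^ 2) +
        2 / 9 * (β - 1) * (v b ^ (β - 1) * v' b ^ 3 - v a ^ (β - 1) * v' a ^ 3) := by
  have hnonneg : 0 ≤ ∫ x in a..b,
      v x ^ (β - 2) * (v x * v'' x + (β - 1) / 3 * v' x ^ 2) ^ 2 :=
    integral_nonneg hab fun x hx ↦ mul_nonneg (Real.rpow_nonneg (hpos x hx).le _) (sq_nonneg _)
  rw [← uIcc_of_le hab] at hv hv' hv'' hpos
  have hv_cont : ContinuousOn v [[a, b]] := fun x hx ↦ (hv x hx).continuousWithinAt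
  have hv'_cont : ContinuousOn v' [[a, b]] := fun x hx ↦ (hv' x hx).continuousWithinAt
  have hv_ne : ∀ x ∈ [[a, b]], v x ≠ 0 := fun x hx ↦ (hpos x hx).ne'
  have hparts : (β - 1) * (∫ x in a..b, v x ^ (β - 2) * v' x ^ 4) +
      3 * (∫ x in a..b, v x ^ (β - 1) * v' x ^ 2 * v'' x) =
        v b ^ (β - 1) * v' b ^ 3 - v a ^ (β - 1) * v' a ^ 3 := by
    simpa only [sub_sub, one_add_one_eq_two, Nat.cast_ofNat, Nat.reduceAdd, Nat.reduceSub] using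
      integral_deriv_rpow_mul_deriv_pow hv hv' hv''.intervalIntegrable hv_ne (β - 1) 3
  rw [integral_rpow_mul_sq_add hv_cont hv'_cont hv'' hv_ne] at hnonneg
  linear_combination hnonneg + 2 / 9 * (β - 1) * hparts

end

/-- Lemma 4.5 of the paper: there is a universal constant `C > 0` such that for every
period `L > 0`, every `β ∈ ℝ`, and every strictly positive `L`-periodic `v ∈ C²(ℝ)`,
`∫₀ᴸ v^β (v'')² ≥ C (1−β)² ∫₀ᴸ v^{β−2} (v')⁴`. -/
theorem stmt_3 :
    ∃ C : ℝ, 0 < C ∧ ∀ (L : ℝ), 0 < L → ∀ (β : ℝ) (v : ℝ → ℝ),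
      ContDiff ℝ 2 v → Function.Periodic v L → (∀ x, 0 < v x) →
      C * (1 - β) ^ 2 * ∫ x in (0:ℝ)..L, v x ^ (β - 2) * (deriv v x) ^ 4 ≤
        ∫ x in (0:ℝ)..L, v x ^ β * (deriv (deriv v) x) ^ 2 := by
  refine ⟨1 / 9, by norm_num, fun L hL β v hv hper hpos ↦ ?_⟩
  have hv' : ContDiff ℝ 1 (deriv v) := hv.deriv'
  simpa only [hper.eq, (periodic_deriv hper).eq, sub_self, mul_zero, add_zero] using
    stmt_3_general hL.le
      (fun x _ ↦ (hv.differentiable two_ne_zero x).hasDerivAt.hasDerivWithinAt)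
      (fun x _ ↦ (hv.differentiable_deriv_two x).hasDerivAt.hasDerivWithinAt)
      (hv'.continuous_deriv le_rfl).continuousOn (fun x _ ↦ hpos x) β
end

section
/- For every L > 0 there exist constants c₁ > 0 and c₂ > 0, depending only on L, with the following property: for every ε ∈ (0,1], every K > 0, and every strictly positive L-periodic u ∈ C³(ℝ) with u(x) ≤ K for all x, setting ū := (1/L)∫₀^L u dx, a := ū²/√(ε + K²), J := (1/2)∫₀^L (u')² dx, I := ∫₀^L f_ε(u)(u''')² dx, and D := ∫₀^L (u'')² dx, one has c₁ a² J ≤ I + c₂ √ε · a · D. -/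
/-!
The quantity that links the two sides is `S = ∫ u (u'')²`. Write `P = ∫ (u')²`, `e = √ε`, and let
`M` and `μ` be the maximum and the minimum of `u`.

Upper bound for `S`: replace the weight `u` by `g = u² / (e + u)`, which differs from `u` by at
most `e` and satisfies `g² ≤ f_ε(u)`. An integration by parts gives `∫ g (u'')² = X - ∫ g u' u'''`,
where `X = ∫ w² (u')² u''` and `w = e / (e + u)`, and the last integral is at most `√(I P)` in
absolute value. A further integration by parts gives `X = 2 / (3 e) * ∫ w³ (u')⁴`, hence
`X² ≤ (∫ w³ (u')⁴) D = 3 / 2 * e * X * D` and so `X ≤ 3 / 2 * e * D`.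

Lower bound for `S`: Cauchy-Schwarz in `P = -∫ (u - μ) u''` and the pointwise bound
`M (u - μ)² ≤ (M - μ)² u` give `M P² ≤ L (M - μ)² S`. Since `(M - μ)² ≤ L P`, this is `M P ≤ L² S`.

For `0 ≤ a ≤ M` the two bounds give `a² P ≤ a L² (√(I P) + 5 / 2 * e * D)`, where Young's inequality
absorbs `√(I P)`. The `a` of the theorem is at most the mean of `u`, because that mean is at most
`K ≤ √(ε + K²)`.
-/

open Set Function

section CauchySchwarz

open MeasureTheory

lemma sq_integral_mul_le_integral_sq_mul_integral_sq {α : Type*} [MeasurableSpace α]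
    {μ : Measure α} {f g : α → ℝ} (hf : MemLp f 2 μ) (hg : MemLp g 2 μ) :
    (∫ x, f x * g x ∂μ) ^ 2 ≤ (∫ x, f x ^ 2 ∂μ) * ∫ x, g x ^ 2 ∂μ := by
  have hfg : Integrable (fun x ↦ f x * g x) μ := hf.integrable_mul hg
  have quadratic_nonneg (t : ℝ) :
      0 ≤ (∫ x, f x ^ 2 ∂μ) * (t * t) + 2 * (∫ x, f x * g x ∂μ) * t + ∫ x, g x ^ 2 ∂μ := by
    calc 0 ≤ ∫ x, (t * f x + g x) ^ 2 ∂μ := integral_nonneg fun x ↦ sq_nonneg _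
      _ = ∫ x, (t * t) * f x ^ 2 + 2 * t * (f x * g x) + g x ^ 2 ∂μ := by
        congr with x
        ring
      _ = _ := by
        have hf2 : Integrable (fun x ↦ t * t * f x ^ 2) μ := hf.integrable_sq.const_mul _
        have hfg2 : Integrable (fun x ↦ 2 * t * (f x * g x)) μ := hfg.const_mul _
        have hsum : Integrable (fun x ↦ t * t * f x ^ 2 + 2 * t * (f x * g x)) μ := hf2.add hfg2
        rw [integral_add hsum hg.integrable_sq,
          integral_add hf2 hfg2,
          integral_const_mul, integral_const_mul]
        ring
  have discrim_nonpos := discrim_le_zero quadratic_nonneg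
  rw [discrim] at discrim_nonpos
  linarith

lemma sq_intervalIntegral_mul_le {f g : ℝ → ℝ} {a b : ℝ} (hab : a ≤ b) (hf : Continuous f)
    (hg : Continuous g) :
    (∫ x in a..b, f x * g x) ^ 2 ≤ (∫ x in a..b, f x ^ 2) * ∫ x in a..b, g x ^ 2 := by
  have memLp {h : ℝ → ℝ} (hh : Continuous h) : MemLp h 2 (volume.restrict (Ioc a b)) :=
    (memLp_two_iff_integrable_sq hh.aestronglyMeasurable).2 (hh.pow 2).integrableOn_Ioc
  simpa only [intervalIntegral.integral_of_le hab] using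
    sq_integral_mul_le_integral_sq_mul_integral_sq (memLp hf) (memLp hg)

end CauchySchwarz

open intervalIntegral

section IterateDeriv

variable {𝕜 F : Type*} [NontriviallyNormedField 𝕜] [NormedAddCommGroup F] [NormedSpace 𝕜 F]
  {f : 𝕜 → F}

lemma hasDerivAt_iterate_deriv {n : WithTop ℕ∞} (hf : ContDiff 𝕜 n f) (k : ℕ) (hk : k + 1 ≤ n)
    (x : 𝕜) : HasDerivAt (deriv^[k] f) (deriv^[k + 1] f x) x := by
  have hdiff : ContDiff 𝕜 (1 : ℕ) (deriv^[k] f) :=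
    ContDiff.iterate_deriv' 1 k (hf.of_le (by simpa [add_comm] using hk))
  rw [iterate_succ_apply']
  exact (hdiff.differentiable one_ne_zero x).hasDerivAt

lemma continuous_iterate_deriv {n : WithTop ℕ∞} (hf : ContDiff 𝕜 n f) (k : ℕ) (hk : k ≤ n) :
    Continuous (deriv^[k] f) :=
  (ContDiff.iterate_deriv' 0 k (hf.of_le (by simpa using hk))).continuous

lemma periodic_iterate_deriv {T : 𝕜} (hf : Periodic f T) (k : ℕ) : Periodic (deriv^[k] f) T := by
  induction k with
  | zero => exact hf
  | succ k ih =>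
    intro x
    rw [iterate_succ_apply', ← deriv_comp_add_const, ih.funext]

end IterateDeriv

section Periodic

variable {T : ℝ}

lemma integral_comp_mul_deriv_eq_zero_of_periodic {f f' g : ℝ → ℝ}
    (hf : ∀ x, HasDerivAt f (f' x) x) (hf' : Continuous f') (hg : Continuous g)
    (hfT : Periodic f T) : ∫ x in 0..T, g (f x) * f' x = 0 := by
  have := integral_comp_mul_deriv (a := 0) (b := T) (fun x _ ↦ hf x) hf'.continuousOn hg
  simpa [hfT.eq] using this

lemma integral_mul_deriv_eq_neg_of_periodic {A : Type*} [NormedRing A] [NormedAlgebra ℝ A]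
    [CompleteSpace A] {f f' g g' : ℝ → A} (hf : ∀ x, HasDerivAt f (f' x) x)
    (hg : ∀ x, HasDerivAt g (g' x) x) (hf' : IntervalIntegrable f' MeasureTheory.volume 0 T)
    (hg' : IntervalIntegrable g' MeasureTheory.volume 0 T) (hfT : Periodic f T)
    (hgT : Periodic g T) : ∫ x in 0..T, f x * g' x = -∫ x in 0..T, f' x * g x := by
  rw [integral_mul_deriv_eq_deriv_mul (fun x _ ↦ hf x) (fun x _ ↦ hg x) hf' hg', hfT.eq, hgT.eq,
    sub_self, zero_sub]

lemma sq_sub_le_mul_integral_sq_deriv {u : ℝ → ℝ} (hu : ContDiff ℝ 1 u) {a b : ℝ} (hab : a ≤ b) :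
    (u b - u a) ^ 2 ≤ (b - a) * ∫ x in a..b, deriv u x ^ 2 := by
  have hu' : Continuous (deriv u) := hu.continuous_deriv le_rfl
  have ftc : ∫ x in a..b, deriv u x = u b - u a :=
    integral_deriv_eq_sub (fun x _ ↦ hu.differentiable one_ne_zero x) (hu'.intervalIntegrable a b)
  simpa [ftc] using sq_intervalIntegral_mul_le hab (f := fun _ ↦ 1) continuous_const hu'

lemma sq_sub_le_mul_integral_sq_deriv_of_periodic {u : ℝ → ℝ} (hu : ContDiff ℝ 1 u)
    (hper : Periodic u T) (hT : 0 < T) (x y : ℝ) :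
    (u x - u y) ^ 2 ≤ T * ∫ s in 0..T, deriv u s ^ 2 := by
  obtain ⟨z, ⟨hyz, hzT⟩, hxz⟩ := hper.exists_mem_Ico hT x y
  have hu' : Continuous (deriv u) := hu.continuous_deriv le_rfl
  have hper' : Periodic (fun s ↦ deriv u s ^ 2) T :=
    (periodic_iterate_deriv hper 1).comp (· ^ 2)
  calc (u x - u y) ^ 2 = (u z - u y) ^ 2 := by rw [hxz]
    _ ≤ (z - y) * ∫ s in y..z, deriv u s ^ 2 := sq_sub_le_mul_integral_sq_deriv hu hyz
    _ ≤ T * ∫ s in y..y + T, deriv u s ^ 2 := by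
      gcongr
      · exact integral_nonneg hyz fun s _ ↦ sq_nonneg _
      · linarith
      · exact integral_mono_interval le_rfl hyz hzT.le (.of_forall fun s ↦ sq_nonneg _)
          ((hu'.pow 2).intervalIntegrable _ _)
    _ = T * ∫ s in 0..T, deriv u s ^ 2 := by
      rw [hper'.intervalIntegral_add_eq y 0, zero_add]

end Periodic

section Interpolation

variable {L : ℝ} {u : ℝ → ℝ}

lemma mul_sq_sub_le_sq_sub_mul {μ M t : ℝ} (hμ : 0 ≤ μ) (hμt : μ ≤ t) (htM : t ≤ M) :
    M * (t - μ) ^ 2 ≤ (M - μ) ^ 2 * t :=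
  calc M * (t - μ) ^ 2 = (t - μ) * (M * (t - μ)) := by ring
    _ ≤ (M - μ) * ((M - μ) * t) := by
      apply mul_le_mul (by linarith) _ _ (by linarith)
      · linarith [mul_le_mul_of_nonneg_left htM hμ]
      · exact mul_nonneg (by linarith) (by linarith)
    _ = (M - μ) ^ 2 * t := by ring

lemma mul_sq_integral_sq_deriv_le (hL : 0 ≤ L) (hu : ContDiff ℝ 2 u) (hper : Periodic u L)
    {μ M : ℝ} (hμ : 0 ≤ μ) (hμu : ∀ x, μ ≤ u x) (huM : ∀ x, u x ≤ M) :
    M * (∫ x in 0..L, deriv u x ^ 2) ^ 2 ≤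
      L * ((M - μ) ^ 2 * ∫ x in 0..L, u x * deriv^[2] u x ^ 2) := by
  have cont₀ : Continuous u := hu.continuous
  have cont₁ : Continuous (deriv u) := continuous_iterate_deriv hu 1 (by norm_num)
  have cont₂ : Continuous (deriv^[2] u) := continuous_iterate_deriv hu 2 le_rfl
  have by_parts : ∫ x in 0..L, 1 * ((u x - μ) * deriv^[2] u x) = -∫ x in 0..L, deriv u x ^ 2 := by
    simp only [one_mul, sq]
    exact integral_mul_deriv_eq_neg_of_periodic
      (fun x ↦ (hasDerivAt_iterate_deriv hu 0 (by norm_num) x).sub_const μ)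
      (hasDerivAt_iterate_deriv hu 1 (by norm_num)) (cont₁.intervalIntegrable _ _)
      (cont₂.intervalIntegrable _ _) (hper.comp (· - μ)) (periodic_iterate_deriv hper 1)
  calc M * (∫ x in 0..L, deriv u x ^ 2) ^ 2
      = M * (∫ x in 0..L, 1 * ((u x - μ) * deriv^[2] u x)) ^ 2 := by rw [by_parts, neg_sq]
    _ ≤ M * (L * ∫ x in 0..L, ((u x - μ) * deriv^[2] u x) ^ 2) := by
      gcongr
      · exact hμ.trans ((hμu 0).trans (huM 0))
      · simpa using sq_intervalIntegral_mul_le hL (f := fun _ ↦ 1) continuous_const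
          (g := fun x ↦ (u x - μ) * deriv^[2] u x) (by fun_prop)
    _ = L * ∫ x in 0..L, M * ((u x - μ) * deriv^[2] u x) ^ 2 := by
      rw [integral_const_mul]
      ring
    _ ≤ L * ∫ x in 0..L, (M - μ) ^ 2 * (u x * deriv^[2] u x ^ 2) := by
      gcongr
      refine integral_mono_on hL (Continuous.intervalIntegrable (by fun_prop) _ _)
        (Continuous.intervalIntegrable (by fun_prop) _ _) fun x _ ↦ ?_
      rw [mul_pow, ← mul_assoc, ← mul_assoc]
      refine mul_le_mul_of_nonneg_right ?_ (sq_nonneg _)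
      exact mul_sq_sub_le_sq_sub_mul hμ (hμu x) (huM x)
    _ = L * ((M - μ) ^ 2 * ∫ x in 0..L, u x * deriv^[2] u x ^ 2) := by
      rw [integral_const_mul]

theorem apply_mul_integral_sq_deriv_le (hL : 0 < L) (hu : ContDiff ℝ 2 u) (hper : Periodic u L)
    (hnonneg : ∀ x, 0 ≤ u x) (x₀ : ℝ) :
    u x₀ * ∫ x in 0..L, deriv u x ^ 2 ≤ L ^ 2 * ∫ x in 0..L, u x * deriv^[2] u x ^ 2 := by
  have compact_range := hper.compact_of_continuous hL.ne' hu.continuous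
  obtain ⟨_, ⟨xmax, rfl⟩, hmax⟩ := compact_range.exists_isGreatest (range_nonempty u)
  obtain ⟨_, ⟨xmin, rfl⟩, hmin⟩ := compact_range.exists_isLeast (range_nonempty u)
  rw [mem_upperBounds, forall_mem_range] at hmax
  rw [mem_lowerBounds, forall_mem_range] at hmin
  set P := ∫ x in 0..L, deriv u x ^ 2
  set S := ∫ x in 0..L, u x * deriv^[2] u x ^ 2
  have P_nonneg : 0 ≤ P := integral_nonneg hL.le fun x _ ↦ sq_nonneg _
  have S_nonneg : 0 ≤ S :=
    integral_nonneg hL.le fun x _ ↦ mul_nonneg (hnonneg x) (sq_nonneg _)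
  have self_bound : P * (u xmax * P) ≤ P * (L ^ 2 * S) :=
    calc P * (u xmax * P) = u xmax * P ^ 2 := by ring
      _ ≤ L * ((u xmax - u xmin) ^ 2 * S) :=
        mul_sq_integral_sq_deriv_le hL.le hu hper (hnonneg xmin) hmin hmax
      _ ≤ L * (L * P * S) := by
        gcongr
        exact sq_sub_le_mul_integral_sq_deriv_of_periodic (hu.of_le one_le_two) hper hL xmax xmin
      _ = P * (L ^ 2 * S) := by ring
  rcases P_nonneg.eq_or_lt with P_zero | P_pos
  · rw [← P_zero, mul_zero]
    positivity
  · calc u x₀ * P ≤ u xmax * P := by gcongr; exact hmax x₀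
      _ ≤ L ^ 2 * S := le_of_mul_le_mul_left self_bound P_pos

end Interpolation

section Regularization

/-- The weight `e / (e + t)`, which localises to the set where a thin film of height `t` is at most
of order `e`. -/
noncomputable def touchdownWeight (e t : ℝ) : ℝ := e / (e + t)

/-- The regularised film height `t² / (e + t)`: it is within `e` of `t`, and its square is at most
the mobility `t⁴ / (e² + t²)`. -/
noncomputable def regularizedHeight (e t : ℝ) : ℝ := t ^ 2 / (e + t)

variable {e t : ℝ}

lemma touchdownWeight_nonneg (he : 0 ≤ e) (ht : 0 ≤ t) : 0 ≤ touchdownWeight e t :=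
  div_nonneg he (add_nonneg he ht)

lemma touchdownWeight_le_one (he : 0 ≤ e) (ht : 0 ≤ t) : touchdownWeight e t ≤ 1 :=
  div_le_one_of_le₀ (le_add_of_nonneg_right ht) (add_nonneg he ht)

lemma hasDerivAt_touchdownWeight (he : e ≠ 0) (het : e + t ≠ 0) :
    HasDerivAt (touchdownWeight e) (-(touchdownWeight e t ^ 2 / e)) t := by
  refine ((hasDerivAt_const t e).div ((hasDerivAt_id t).const_add e) het).congr_deriv ?_
  simp only [touchdownWeight, id]
  field_simp [he]
  ring

lemma hasDerivAt_regularizedHeight (het : e + t ≠ 0) :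
    HasDerivAt (regularizedHeight e) (1 - touchdownWeight e t ^ 2) t := by
  refine ((hasDerivAt_pow 2 t).div ((hasDerivAt_id t).const_add e) het).congr_deriv ?_
  simp only [touchdownWeight, id]
  field_simp
  norm_num
  ring

lemma le_regularizedHeight_add (he : 0 < e) (ht : 0 ≤ t) : t ≤ regularizedHeight e t + e := by
  rw [regularizedHeight, div_add' _ _ _ (by positivity), le_div_iff₀ (by positivity)]
  nlinarith [mul_nonneg he.le ht]

lemma sq_regularizedHeight_le (he : 0 < e) (ht : 0 ≤ t) :
    regularizedHeight e t ^ 2 ≤ t ^ 4 / (e ^ 2 + t ^ 2) := by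
  rw [regularizedHeight, div_pow, ← pow_mul]
  gcongr
  nlinarith [mul_nonneg he.le ht]

variable {u : ℝ → ℝ}

lemma continuous_touchdownWeight_comp (he : 0 < e) (hu : Continuous u) (hnonneg : ∀ x, 0 ≤ u x) :
    Continuous fun x ↦ touchdownWeight e (u x) :=
  continuous_const.div (continuous_const.add hu) fun x ↦
    (add_pos_of_pos_of_nonneg he (hnonneg x)).ne'

lemma continuous_regularizedHeight_comp (he : 0 < e) (hu : Continuous u)
    (hnonneg : ∀ x, 0 ≤ u x) : Continuous fun x ↦ regularizedHeight e (u x) :=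
  (hu.pow 2).div (continuous_const.add hu) fun x ↦
    (add_pos_of_pos_of_nonneg he (hnonneg x)).ne'

end Regularization

section Dissipation

variable {L e : ℝ} {u : ℝ → ℝ}

lemma integral_touchdownWeight_sq_mul_eq (he : 0 < e) (hu : ContDiff ℝ 2 u) (hper : Periodic u L)
    (hnonneg : ∀ x, 0 ≤ u x) :
    ∫ x in 0..L, touchdownWeight e (u x) ^ 2 * deriv u x ^ 2 * deriv^[2] u x =
      2 / (3 * e) * ∫ x in 0..L, touchdownWeight e (u x) ^ 3 * deriv u x ^ 4 := by
  have cont_w := continuous_touchdownWeight_comp he hu.continuous hnonneg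
  have cont₁ : Continuous (deriv u) := continuous_iterate_deriv hu 1 (by norm_num)
  have cont₂ : Continuous (deriv^[2] u) := continuous_iterate_deriv hu 2 le_rfl
  have deriv_w_sq (x : ℝ) : HasDerivAt (fun x ↦ touchdownWeight e (u x) ^ 2)
      (-(2 / e * touchdownWeight e (u x) ^ 3 * deriv u x)) x := by
    have deriv_w := (hasDerivAt_touchdownWeight he.ne'
      (add_pos_of_pos_of_nonneg he (hnonneg x)).ne').comp x
      (hasDerivAt_iterate_deriv hu 0 (by norm_num) x)
    exact (deriv_w.pow 2).congr_deriv (by simp; ring)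
  have deriv_cube (x : ℝ) :
      HasDerivAt (fun x ↦ deriv u x ^ 3) (3 * deriv u x ^ 2 * deriv^[2] u x) x :=
    (hasDerivAt_iterate_deriv hu 1 (by norm_num) x).pow 3
  have by_parts := integral_mul_deriv_eq_neg_of_periodic deriv_w_sq deriv_cube
    (Continuous.intervalIntegrable (by fun_prop) 0 L)
    (Continuous.intervalIntegrable (by fun_prop) 0 L)
    (hper.comp (touchdownWeight e · ^ 2)) ((periodic_iterate_deriv hper 1).comp (· ^ 3))
  calc ∫ x in 0..L, touchdownWeight e (u x) ^ 2 * deriv u x ^ 2 * deriv^[2] u x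
      = 1 / 3 * ∫ x in 0..L,
          touchdownWeight e (u x) ^ 2 * (3 * deriv u x ^ 2 * deriv^[2] u x) := by
        rw [← integral_const_mul]
        congr with x
        ring
    _ = 2 / (3 * e) * ∫ x in 0..L, touchdownWeight e (u x) ^ 3 * deriv u x ^ 4 := by
        rw [by_parts, ← integral_neg, ← integral_const_mul,
          ← integral_const_mul]
        congr with x
        ring

lemma integral_touchdownWeight_sq_mul_le (hL : 0 ≤ L) (he : 0 < e) (hu : ContDiff ℝ 2 u)
    (hper : Periodic u L) (hnonneg : ∀ x, 0 ≤ u x) :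
    ∫ x in 0..L, touchdownWeight e (u x) ^ 2 * deriv u x ^ 2 * deriv^[2] u x ≤
      3 / 2 * e * ∫ x in 0..L, deriv^[2] u x ^ 2 := by
  have cont_w := continuous_touchdownWeight_comp he hu.continuous hnonneg
  have cont₁ : Continuous (deriv u) := continuous_iterate_deriv hu 1 (by norm_num)
  have cont₂ : Continuous (deriv^[2] u) := continuous_iterate_deriv hu 2 le_rfl
  have by_parts := integral_touchdownWeight_sq_mul_eq he hu hper hnonneg
  set X := ∫ x in 0..L, touchdownWeight e (u x) ^ 2 * deriv u x ^ 2 * deriv^[2] u x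
  set D := ∫ x in 0..L, deriv^[2] u x ^ 2
  have D_nonneg : 0 ≤ D := integral_nonneg hL fun x _ ↦ sq_nonneg _
  have self_bound : X * X ≤ 3 / 2 * e * D * X :=
    calc X * X = X ^ 2 := (sq X).symm
      _ ≤ (∫ x in 0..L, (touchdownWeight e (u x) ^ 2 * deriv u x ^ 2) ^ 2) * D :=
        sq_intervalIntegral_mul_le hL (by fun_prop) cont₂
      _ ≤ (∫ x in 0..L, touchdownWeight e (u x) ^ 3 * deriv u x ^ 4) * D := by
        gcongr
        refine integral_mono_on hL (Continuous.intervalIntegrable (by fun_prop) _ _)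
          (Continuous.intervalIntegrable (by fun_prop) _ _) fun x _ ↦ ?_
        have pow_anti : touchdownWeight e (u x) ^ 4 ≤ touchdownWeight e (u x) ^ 3 :=
          pow_le_pow_of_le_one (touchdownWeight_nonneg he.le (hnonneg x))
            (touchdownWeight_le_one he.le (hnonneg x)) (by norm_num)
        calc (touchdownWeight e (u x) ^ 2 * deriv u x ^ 2) ^ 2
            = touchdownWeight e (u x) ^ 4 * deriv u x ^ 4 := by ring
          _ ≤ touchdownWeight e (u x) ^ 3 * deriv u x ^ 4 := by gcongr
      _ = 3 / 2 * e * D * X := by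
        rw [by_parts]
        field_simp
  rcases le_or_gt X 0 with X_nonpos | X_pos
  · exact X_nonpos.trans (by positivity)
  · exact le_of_mul_le_mul_right self_bound X_pos

lemma integral_regularizedHeight_mul_eq (he : 0 < e) (hu : ContDiff ℝ 3 u) (hper : Periodic u L)
    (hnonneg : ∀ x, 0 ≤ u x) :
    ∫ x in 0..L, regularizedHeight e (u x) * deriv^[2] u x ^ 2 =
      (∫ x in 0..L, touchdownWeight e (u x) ^ 2 * deriv u x ^ 2 * deriv^[2] u x) -
        ∫ x in 0..L, regularizedHeight e (u x) * deriv^[3] u x * deriv u x := by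
  have cont_w := continuous_touchdownWeight_comp he hu.continuous hnonneg
  have cont_g := continuous_regularizedHeight_comp he hu.continuous hnonneg
  have cont₁ : Continuous (deriv u) := continuous_iterate_deriv hu 1 (by norm_num)
  have cont₂ : Continuous (deriv^[2] u) := continuous_iterate_deriv hu 2 (by norm_num)
  have cont₃ : Continuous (deriv^[3] u) := continuous_iterate_deriv hu 3 le_rfl
  have deriv₁ := hasDerivAt_iterate_deriv hu 1 (by norm_num)
  have per₁ : Periodic (deriv u) L := periodic_iterate_deriv hper 1
  have per₂ : Periodic (deriv^[2] u) L := periodic_iterate_deriv hper 2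
  have deriv_gu₂ (x : ℝ) : HasDerivAt (fun x ↦ regularizedHeight e (u x) * deriv^[2] u x)
      ((1 - touchdownWeight e (u x) ^ 2) * deriv u x * deriv^[2] u x +
        regularizedHeight e (u x) * deriv^[3] u x) x :=
    ((hasDerivAt_regularizedHeight
      (add_pos_of_pos_of_nonneg he (hnonneg x)).ne').comp x
      (hasDerivAt_iterate_deriv hu 0 (by norm_num) x)).mul
      (hasDerivAt_iterate_deriv hu 2 (by norm_num) x)
  have by_parts := integral_mul_deriv_eq_neg_of_periodic deriv_gu₂ deriv₁
    (Continuous.intervalIntegrable (by fun_prop) 0 L) (cont₂.intervalIntegrable 0 L)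
    (fun x ↦ by simp only [hper x, per₂ x]) per₁
  have cube_exact : ∫ x in 0..L, deriv u x ^ 2 * deriv^[2] u x = 0 :=
    integral_comp_mul_deriv_eq_zero_of_periodic deriv₁ cont₂ (continuous_pow 2) per₁
  calc ∫ x in 0..L, regularizedHeight e (u x) * deriv^[2] u x ^ 2
      = ∫ x in 0..L, regularizedHeight e (u x) * deriv^[2] u x * deriv^[2] u x := by
        simp only [sq, mul_assoc]
    _ = ∫ x in 0..L, (touchdownWeight e (u x) ^ 2 * deriv u x ^ 2 * deriv^[2] u x -
          regularizedHeight e (u x) * deriv^[3] u x * deriv u x -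
          deriv u x ^ 2 * deriv^[2] u x) := by
        refine by_parts.trans ?_
        rw [← integral_neg]
        congr with x
        simp only [iterate_one]
        ring
    _ = _ := by
        rw [integral_sub, integral_sub, cube_exact, sub_zero]
        all_goals exact Continuous.intervalIntegrable (by fun_prop) _ _

lemma sq_integral_regularizedHeight_mul_le (hL : 0 ≤ L) (he : 0 < e) (hu : ContDiff ℝ 3 u)
    (hnonneg : ∀ x, 0 ≤ u x) :
    (∫ x in 0..L, regularizedHeight e (u x) * deriv^[3] u x * deriv u x) ^ 2 ≤
      (∫ x in 0..L, u x ^ 4 / (e ^ 2 + u x ^ 2) * deriv^[3] u x ^ 2) *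
        ∫ x in 0..L, deriv u x ^ 2 := by
  have cont_g := continuous_regularizedHeight_comp he hu.continuous hnonneg
  have cont₀ : Continuous u := hu.continuous
  have cont₁ : Continuous (deriv u) := continuous_iterate_deriv hu 1 (by norm_num)
  have cont₃ : Continuous (deriv^[3] u) := continuous_iterate_deriv hu 3 le_rfl
  have cont_mobility : Continuous fun x ↦ u x ^ 4 / (e ^ 2 + u x ^ 2) :=
    (cont₀.pow 4).div (by fun_prop) fun x ↦ by positivity
  refine (sq_intervalIntegral_mul_le hL (by fun_prop) cont₁).trans ?_
  gcongr
  · exact integral_nonneg hL fun x _ ↦ sq_nonneg _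
  · refine integral_mono_on hL (Continuous.intervalIntegrable (by fun_prop) _ _)
      (Continuous.intervalIntegrable (by fun_prop) _ _) fun x _ ↦ ?_
    rw [mul_pow]
    exact mul_le_mul_of_nonneg_right (sq_regularizedHeight_le he (hnonneg x)) (sq_nonneg _)

theorem integral_mul_sq_deriv_two_le (hL : 0 ≤ L) (he : 0 < e) (hu : ContDiff ℝ 3 u)
    (hper : Periodic u L) (hnonneg : ∀ x, 0 ≤ u x) :
    ∫ x in 0..L, u x * deriv^[2] u x ^ 2 ≤
      √((∫ x in 0..L, u x ^ 4 / (e ^ 2 + u x ^ 2) * deriv^[3] u x ^ 2) *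
        ∫ x in 0..L, deriv u x ^ 2) + 5 / 2 * e * ∫ x in 0..L, deriv^[2] u x ^ 2 := by
  have cont_g := continuous_regularizedHeight_comp he hu.continuous hnonneg
  have cont₀ : Continuous u := hu.continuous
  have cont₂ : Continuous (deriv^[2] u) := continuous_iterate_deriv hu 2 (by norm_num)
  have weight_le : ∫ x in 0..L, u x * deriv^[2] u x ^ 2 ≤
      (∫ x in 0..L, regularizedHeight e (u x) * deriv^[2] u x ^ 2) +
        e * ∫ x in 0..L, deriv^[2] u x ^ 2 := by
    rw [← integral_const_mul, ← integral_add]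
    · refine integral_mono_on hL (Continuous.intervalIntegrable (by fun_prop) _ _)
        (Continuous.intervalIntegrable (by fun_prop) _ _) fun x _ ↦ ?_
      rw [← add_mul]
      exact mul_le_mul_of_nonneg_right (le_regularizedHeight_add he (hnonneg x)) (sq_nonneg _)
    all_goals exact Continuous.intervalIntegrable (by fun_prop) _ _
  rw [integral_regularizedHeight_mul_eq he hu hper hnonneg] at weight_le
  have dissipation_le :=
    Real.abs_le_sqrt (sq_integral_regularizedHeight_mul_le hL he hu hnonneg)
  have touchdown_le :=
    integral_touchdownWeight_sq_mul_le hL he (hu.of_le (by norm_num)) hper hnonneg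
  linarith [neg_le_of_abs_le dissipation_le]

end Dissipation

lemma exists_sq_mean_div_sqrt_le {L ε K : ℝ} {u : ℝ → ℝ} (hL : 0 < L) (hε : 0 ≤ ε)
    (hu : Continuous u) (hnonneg : ∀ x, 0 ≤ u x) (hle : ∀ x, u x ≤ K) :
    ∃ x₀, ((1 / L) * ∫ x in 0..L, u x) ^ 2 / √(ε + K ^ 2) ≤ u x₀ := by
  obtain ⟨x₀, -, mean_eq⟩ := exists_eq_interval_average hL.ne hu.continuousOn
  rw [interval_average_eq, sub_zero, smul_eq_mul, ← one_div] at mean_eq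
  have height_le_sqrt : u x₀ ≤ √(ε + K ^ 2) :=
    (hle x₀).trans (Real.le_sqrt_of_sq_le (le_add_of_nonneg_left hε))
  refine ⟨x₀, div_le_of_le_mul₀ (Real.sqrt_nonneg _) (hnonneg x₀) ?_⟩
  rw [← mean_eq, sq]
  exact mul_le_mul_of_nonneg_left height_le_sqrt (hnonneg x₀)

theorem stmt_7_general {L ε a x₀ : ℝ} {u : ℝ → ℝ} (hL : 0 < L) (hε : 0 < ε)
    (hu : ContDiff ℝ 3 u) (hper : Periodic u L) (hnonneg : ∀ x, 0 ≤ u x) (ha : 0 ≤ a)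
    (hau : a ≤ u x₀) :
    2 / L ^ 4 * a ^ 2 * (1 / 2 * ∫ x in 0..L, deriv u x ^ 2) ≤
      (∫ x in 0..L, u x ^ 4 / (ε + u x ^ 2) * deriv^[3] u x ^ 2) +
        5 / L ^ 2 * √ε * a * ∫ x in 0..L, deriv^[2] u x ^ 2 := by
  have interpolation := apply_mul_integral_sq_deriv_le hL (hu.of_le (by norm_num)) hper hnonneg x₀
  have dissipation :=
    integral_mul_sq_deriv_two_le hL.le (Real.sqrt_pos.2 hε) hu hper hnonneg
  rw [Real.sq_sqrt hε.le] at dissipation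
  set I := ∫ x in 0..L, u x ^ 4 / (ε + u x ^ 2) * deriv^[3] u x ^ 2
  set P := ∫ x in 0..L, deriv u x ^ 2
  set D := ∫ x in 0..L, deriv^[2] u x ^ 2
  have P_nonneg : 0 ≤ P := integral_nonneg hL.le fun x _ ↦ sq_nonneg _
  have I_nonneg : 0 ≤ I := integral_nonneg hL.le fun x _ ↦ by positivity
  have bound : a * P ≤ L ^ 2 * (√(I * P) + 5 / 2 * √ε * D) :=
    calc a * P ≤ u x₀ * P := by gcongr
      _ ≤ _ := interpolation.trans (by gcongr)
  have young : 2 * (a * L ^ 2 * √(I * P)) ≤ a ^ 2 * P + L ^ 4 * I :=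
    calc 2 * (a * L ^ 2 * √(I * P)) = 2 * (a * √P) * (L ^ 2 * √I) := by
          rw [Real.sqrt_mul I_nonneg]
          ring
      _ ≤ (a * √P) ^ 2 + (L ^ 2 * √I) ^ 2 := two_mul_le_add_sq _ _
      _ = a ^ 2 * P + L ^ 4 * I := by
          rw [mul_pow, mul_pow, Real.sq_sqrt P_nonneg, Real.sq_sqrt I_nonneg, ← pow_mul]
  have absorbed : a ^ 2 * P ≤ L ^ 4 * I + 5 * L ^ 2 * √ε * a * D := by
    linarith [mul_le_mul_of_nonneg_left bound ha]
  calc 2 / L ^ 4 * a ^ 2 * (1 / 2 * P) = a ^ 2 * P / L ^ 4 := by ring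
    _ ≤ (L ^ 4 * I + 5 * L ^ 2 * √ε * a * D) / L ^ 4 := by gcongr
    _ = I + 5 / L ^ 2 * √ε * a * D := by field_simp

/-- Inequality (3.36) of the paper: for every `L > 0` there are `c₁, c₂ > 0` depending
only on `L` such that for all `ε ∈ (0,1]`, `K > 0`, and strictly positive `L`-periodic
`u ∈ C³(ℝ)` bounded by `K`, with `ū = (1/L)∫₀ᴸ u`, `a = ū²/√(ε+K²)`,
`J = (1/2)∫₀ᴸ (u')²`, `I = ∫₀ᴸ f_ε(u)(u''')²`, `D = ∫₀ᴸ (u'')²`, one has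
`c₁ a² J ≤ I + c₂ √ε a D`. -/
theorem stmt_7 (L : ℝ) (hL : 0 < L) :
    ∃ c₁ c₂ : ℝ, 0 < c₁ ∧ 0 < c₂ ∧
      ∀ (ε K : ℝ), ε ∈ Set.Ioc (0 : ℝ) 1 → 0 < K →
        ∀ u : ℝ → ℝ, ContDiff ℝ 3 u → Function.Periodic u L →
          (∀ x, 0 < u x) → (∀ x, u x ≤ K) →
          c₁ * ((((1 / L) * ∫ x in (0:ℝ)..L, u x) ^ 2 / Real.sqrt (ε + K ^ 2)) ^ 2) *
              ((1 / 2) * ∫ x in (0:ℝ)..L, (deriv u x) ^ 2) ≤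
            (∫ x in (0:ℝ)..L, (u x ^ 4 / (ε + u x ^ 2)) * (deriv^[3] u x) ^ 2) +
              c₂ * Real.sqrt ε *
                (((1 / L) * ∫ x in (0:ℝ)..L, u x) ^ 2 / Real.sqrt (ε + K ^ 2)) *
                ∫ x in (0:ℝ)..L, (deriv^[2] u x) ^ 2 := by
  refine ⟨2 / L ^ 4, 5 / L ^ 2, by positivity, by positivity,
    fun ε K hε _ u hu hper hpos hle ↦ ?_⟩
  obtain ⟨x₀, hx₀⟩ :=
    exists_sq_mean_div_sqrt_le hL hε.1.le hu.continuous (fun x ↦ (hpos x).le) hle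
  exact stmt_7_general hL hε.1 hu hper (fun x ↦ (hpos x).le) (by positivity) hx₀
end

section
/- For all L > 0, C > 0, δ > 0, and every x₀ ∈ [0, L], one has ∫₀^L (δ + C|x − x₀|^{1/2})^{−2} dx ≥ (1/(2C²)) · ln(1 + C²L/(2δ²)). -/
/-! Since `(δ + C√t)² ≤ 2(δ² + C²t)`, the integral of `(δ + C√t)⁻²` over `[0, a]` is at least
`(2C²)⁻¹ log (1 + C²a/δ²)`. Splitting the interval at `x₀` and measuring the distance to `x₀` on
each piece gives two such bounds, which `1 + u + v ≤ (1 + u)(1 + v)` combines into one. -/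

open MeasureTheory

theorem log_one_add_add_le {u v : ℝ} (hu : 0 ≤ u) (hv : 0 ≤ v) :
    Real.log (1 + (u + v)) ≤ Real.log (1 + u) + Real.log (1 + v) := by
  rw [← Real.log_mul (by positivity) (by positivity)]
  gcongr
  linarith [mul_nonneg hu hv]

theorem integral_inv_add_mul {a b c d : ℝ} (hd : d ≠ 0) (ha : 0 < c + d * a)
    (hb : 0 < c + d * b) :
    ∫ x in a..b, (c + d * x)⁻¹ = d⁻¹ * Real.log ((c + d * b) / (c + d * a)) := by
  rw [intervalIntegral.integral_comp_add_mul (fun y => y⁻¹) hd, integral_inv_of_pos ha hb,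
    smul_eq_mul]

theorem integral_comp_abs_sub {E : Type*} [NormedAddCommGroup E] [NormedSpace ℝ E]
    {f : ℝ → E} {a b x₀ : ℝ} (ha : a ≤ x₀) (hb : x₀ ≤ b)
    (hfa : IntervalIntegrable f volume 0 (x₀ - a))
    (hfb : IntervalIntegrable f volume 0 (b - x₀)) :
    ∫ x in a..b, f |x - x₀| = (∫ t in (0)..(x₀ - a), f t) + ∫ t in (0)..(b - x₀), f t := by
  have left_eq : Set.EqOn (fun x => f (x₀ - x)) (fun x => f |x - x₀|) (Set.uIcc a x₀) := by
    intro x hx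
    rw [Set.uIcc_of_le ha] at hx
    simp only [abs_of_nonpos (sub_nonpos.2 hx.2), neg_sub]
  have right_eq : Set.EqOn (fun x => f (x - x₀)) (fun x => f |x - x₀|) (Set.uIcc x₀ b) := by
    intro x hx
    rw [Set.uIcc_of_le hb] at hx
    simp only [abs_of_nonneg (sub_nonneg.2 hx.1)]
  have left_integrable : IntervalIntegrable (fun x => f |x - x₀|) volume a x₀ := by
    refine IntervalIntegrable.congr_uIoo ?_ (left_eq.mono Set.uIoo_subset_uIcc_self)
    simpa using (hfa.comp_sub_left x₀).symm
  have right_integrable : IntervalIntegrable (fun x => f |x - x₀|) volume x₀ b := by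
    refine IntervalIntegrable.congr_uIoo ?_ (right_eq.mono Set.uIoo_subset_uIcc_self)
    simpa using hfb.comp_sub_right x₀
  rw [← intervalIntegral.integral_add_adjacent_intervals left_integrable right_integrable,
    ← intervalIntegral.integral_congr left_eq, ← intervalIntegral.integral_congr right_eq,
    intervalIntegral.integral_comp_sub_left, intervalIntegral.integral_comp_sub_right, sub_self]

section

variable {C δ : ℝ}

theorem continuous_inv_sq_add_mul_sqrt (hC : 0 ≤ C) (hδ : 0 < δ) :
    Continuous fun t : ℝ => ((δ + C * √t) ^ 2)⁻¹ :=
  Continuous.inv₀ (by fun_prop) fun t => by positivity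

theorem sq_add_mul_sqrt_le {t : ℝ} (ht : 0 ≤ t) :
    (δ + C * √t) ^ 2 ≤ 2 * δ ^ 2 + 2 * C ^ 2 * t :=
  calc (δ + C * √t) ^ 2 ≤ 2 * (δ ^ 2 + (C * √t) ^ 2) := add_sq_le
    _ = 2 * δ ^ 2 + 2 * C ^ 2 * t := by rw [mul_pow, Real.sq_sqrt ht]; ring

theorem log_le_integral_inv_sq_add_mul_sqrt (hC : 0 < C) (hδ : 0 < δ) {a : ℝ} (ha : 0 ≤ a) :
    1 / (2 * C ^ 2) * Real.log (1 + C ^ 2 * a / δ ^ 2) ≤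
      ∫ t in (0)..a, ((δ + C * √t) ^ 2)⁻¹ := by
  have linear_pos {t : ℝ} (ht : 0 ≤ t) : 0 < 2 * δ ^ 2 + 2 * C ^ 2 * t := by positivity
  have linear_integrable :
      IntervalIntegrable (fun t => (2 * δ ^ 2 + 2 * C ^ 2 * t)⁻¹) volume 0 a := by
    refine (ContinuousOn.inv₀ (by fun_prop) fun t ht => ?_).intervalIntegrable_of_Icc ha
    exact (linear_pos ht.1).ne'
  calc 1 / (2 * C ^ 2) * Real.log (1 + C ^ 2 * a / δ ^ 2)
      = ∫ t in (0)..a, (2 * δ ^ 2 + 2 * C ^ 2 * t)⁻¹ := by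
        rw [integral_inv_add_mul (by positivity) (linear_pos le_rfl) (linear_pos ha), one_div]
        congr 2
        field_simp
        ring
    _ ≤ ∫ t in (0)..a, ((δ + C * √t) ^ 2)⁻¹ := by
        refine intervalIntegral.integral_mono_on ha linear_integrable
          ((continuous_inv_sq_add_mul_sqrt hC.le hδ).intervalIntegrable _ _) fun t ht => ?_
        exact inv_anti₀ (by positivity) (sq_add_mul_sqrt_le ht.1)

theorem stmt_8_general (hC : 0 < C) (hδ : 0 < δ) {a b x₀ : ℝ} (hx₀ : x₀ ∈ Set.Icc a b) :
    1 / (2 * C ^ 2) * Real.log (1 + C ^ 2 * (b - a) / δ ^ 2) ≤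
      ∫ x in a..b, ((δ + C * √|x - x₀|) ^ 2)⁻¹ := by
  have left_nonneg : 0 ≤ x₀ - a := sub_nonneg.2 hx₀.1
  have right_nonneg : 0 ≤ b - x₀ := sub_nonneg.2 hx₀.2
  have hcont := continuous_inv_sq_add_mul_sqrt hC.le hδ
  calc 1 / (2 * C ^ 2) * Real.log (1 + C ^ 2 * (b - a) / δ ^ 2)
      = 1 / (2 * C ^ 2) *
          Real.log (1 + (C ^ 2 * (x₀ - a) / δ ^ 2 + C ^ 2 * (b - x₀) / δ ^ 2)) := by
        ring_nf
    _ ≤ 1 / (2 * C ^ 2) * Real.log (1 + C ^ 2 * (x₀ - a) / δ ^ 2) +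
          1 / (2 * C ^ 2) * Real.log (1 + C ^ 2 * (b - x₀) / δ ^ 2) := by
        rw [← mul_add]
        gcongr
        exact log_one_add_add_le (by positivity) (by positivity)
    _ ≤ (∫ t in (0)..(x₀ - a), ((δ + C * √t) ^ 2)⁻¹) +
          ∫ t in (0)..(b - x₀), ((δ + C * √t) ^ 2)⁻¹ :=
        add_le_add (log_le_integral_inv_sq_add_mul_sqrt hC hδ left_nonneg)
          (log_le_integral_inv_sq_add_mul_sqrt hC hδ right_nonneg)
    _ = ∫ x in a..b, ((δ + C * √|x - x₀|) ^ 2)⁻¹ :=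
        (integral_comp_abs_sub hx₀.1 hx₀.2 (hcont.intervalIntegrable _ _)
          (hcont.intervalIntegrable _ _)).symm

end

/-- Integral lower bound from Section 6: for all `L, C, δ > 0` and `x₀ ∈ [0,L]`,
`∫₀ᴸ (δ + C|x−x₀|^{1/2})^{−2} dx ≥ (1/(2C²)) ln(1 + C²L/(2δ²))`. -/
theorem stmt_8 (L C δ : ℝ) (hL : 0 < L) (hC : 0 < C) (hδ : 0 < δ)
    (x₀ : ℝ) (hx₀ : x₀ ∈ Set.Icc (0 : ℝ) L) :
    (1 / (2 * C ^ 2)) * Real.log (1 + C ^ 2 * L / (2 * δ ^ 2)) ≤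
      ∫ x in (0:ℝ)..L, ((δ + C * Real.sqrt |x - x₀|) ^ 2)⁻¹ := by
  refine le_trans ?_ (stmt_8_general hC hδ hx₀)
  rw [sub_zero]
  gcongr
  linarith [sq_nonneg δ]
end

section
/- Let L, C, ε, K > 0 and let v : [0, L] → (0, ∞) be continuous, attaining its minimum value δ := min_{[0,L]} v at a point x₀ ∈ [0, L], and suppose v(x) ≤ δ + C|x − x₀|^{1/2} for all x ∈ [0, L]. If ε ∫₀^L v(x)^{−2} dx ≤ K, then δ ≥ C √(L/2) · exp(−C²K/ε). -/
/-!
Write `δ = v x₀`. The square-root bound and `(p + q)² ≤ 2 (p² + q²)` give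
`v x ^ (-2) ≥ (2 (δ² + C² |x - x₀|))⁻¹`. Integrating over the part of the interval on one side of
`x₀`, of length `s`, yields `1 + C² s / δ² ≤ exp (2 C² ∫ v ^ (-2))`. Since `(1 + p) (1 + q) ≥ p + q`
for `p, q ≥ 0`, multiplying the two one-sided bounds gives `C² L / δ² ≤ exp (2 C² ∫ v ^ (-2))` over
the whole interval, wherever `x₀` lies.
-/

open MeasureTheory Set

theorem inv_two_mul_add_sq_le_inv_sq {p q w : ℝ} (hw : 0 < w) (h : w ≤ p + q) :
    (2 * (p ^ 2 + q ^ 2))⁻¹ ≤ (w ^ 2)⁻¹ := by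
  have hsq : w ^ 2 ≤ 2 * (p ^ 2 + q ^ 2) := (pow_le_pow_left₀ hw.le h 2).trans add_sq_le
  exact inv_anti₀ (by positivity) hsq

theorem integral_inv_add_mul_s9 {A B s : ℝ} (hA : 0 < A) (hB : B ≠ 0) (hs : 0 < A + B * s) :
    ∫ t in (0 : ℝ)..s, (A + B * t)⁻¹ = B⁻¹ * Real.log ((A + B * s) / A) := by
  rw [intervalIntegral.integral_comp_add_mul (fun y ↦ y⁻¹) hB, mul_zero, add_zero,
    integral_inv_of_pos hA hs, smul_eq_mul]

theorem one_add_div_le_exp_integral_inv_sq {C d s : ℝ} {u : ℝ → ℝ} (hd : d ≠ 0) (hs : 0 ≤ s)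
    (hint : IntervalIntegrable (fun t ↦ (u t ^ 2)⁻¹) volume 0 s)
    (hpos : ∀ t ∈ Icc 0 s, 0 < u t) (hu : ∀ t ∈ Icc 0 s, u t ≤ d + C * √t) :
    1 + C ^ 2 * s / d ^ 2 ≤ Real.exp (2 * C ^ 2 * ∫ t in (0 : ℝ)..s, (u t ^ 2)⁻¹) := by
  rcases eq_or_ne C 0 with rfl | hC
  · simp
  have hden : ∀ t ∈ Icc 0 s, 2 * (d ^ 2 + C ^ 2 * t) ≠ 0 := fun t ht ↦ by
    have := ht.1
    positivity
  have hcont : ContinuousOn (fun t ↦ (2 * (d ^ 2 + C ^ 2 * t))⁻¹) (Icc 0 s) :=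
    ContinuousOn.inv₀ (by fun_prop) hden
  have hpoint : ∀ t ∈ Icc 0 s, (2 * (d ^ 2 + C ^ 2 * t))⁻¹ ≤ (u t ^ 2)⁻¹ := fun t ht ↦ by
    simpa only [mul_pow, Real.sq_sqrt ht.1] using
      inv_two_mul_add_sq_le_inv_sq (hpos t ht) (hu t ht)
  have hmodel : ∫ t in (0 : ℝ)..s, (2 * (d ^ 2 + C ^ 2 * t))⁻¹ =
      Real.log (1 + C ^ 2 * s / d ^ 2) / (2 * C ^ 2) := by
    simp only [mul_inv, intervalIntegral.integral_const_mul]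
    rw [integral_inv_add_mul_s9 (by positivity) (by positivity) (by positivity), add_div,
      div_self (by positivity)]
    field_simp
  have hmono := intervalIntegral.integral_mono_on hs
    (hcont.intervalIntegrable_of_Icc hs) hint hpoint
  rw [hmodel, div_le_iff₀' (by positivity)] at hmono
  exact (Real.log_le_iff_le_exp (by positivity)).1 hmono

theorem one_add_div_le_exp_integral_inv_sq_right {x₀ b C d : ℝ} {v : ℝ → ℝ} (hd : d ≠ 0)
    (hb : x₀ ≤ b) (hint : IntervalIntegrable (fun x ↦ (v x ^ 2)⁻¹) volume x₀ b)
    (hpos : ∀ x ∈ Icc x₀ b, 0 < v x) (hv : ∀ x ∈ Icc x₀ b, v x ≤ d + C * √(x - x₀)) :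
    1 + C ^ 2 * (b - x₀) / d ^ 2 ≤ Real.exp (2 * C ^ 2 * ∫ x in x₀..b, (v x ^ 2)⁻¹) := by
  have hmem : ∀ t ∈ Icc 0 (b - x₀), x₀ + t ∈ Icc x₀ b := fun t ht ↦
    ⟨le_add_of_nonneg_right ht.1, le_sub_iff_add_le'.1 ht.2⟩
  have h := one_add_div_le_exp_integral_inv_sq (u := fun t ↦ v (x₀ + t)) hd (sub_nonneg.2 hb)
    (by simpa only [sub_self] using hint.comp_add_left x₀) (fun t ht ↦ hpos _ (hmem t ht))
    (fun t ht ↦ by simpa only [add_sub_cancel_left] using hv _ (hmem t ht))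
  rwa [intervalIntegral.integral_comp_add_left (fun x ↦ (v x ^ 2)⁻¹), add_zero,
    add_sub_cancel] at h

theorem one_add_div_le_exp_integral_inv_sq_left {a x₀ C d : ℝ} {v : ℝ → ℝ} (hd : d ≠ 0)
    (ha : a ≤ x₀) (hint : IntervalIntegrable (fun x ↦ (v x ^ 2)⁻¹) volume a x₀)
    (hpos : ∀ x ∈ Icc a x₀, 0 < v x) (hv : ∀ x ∈ Icc a x₀, v x ≤ d + C * √(x₀ - x)) :
    1 + C ^ 2 * (x₀ - a) / d ^ 2 ≤ Real.exp (2 * C ^ 2 * ∫ x in a..x₀, (v x ^ 2)⁻¹) := by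
  have hmem : ∀ t ∈ Icc 0 (x₀ - a), x₀ - t ∈ Icc a x₀ := fun t ht ↦
    ⟨le_sub_comm.1 ht.2, sub_le_self x₀ ht.1⟩
  have h := one_add_div_le_exp_integral_inv_sq (u := fun t ↦ v (x₀ - t)) hd (sub_nonneg.2 ha)
    (by simpa only [sub_self] using (hint.comp_sub_left x₀).symm)
    (fun t ht ↦ hpos _ (hmem t ht))
    (fun t ht ↦ by simpa only [sub_sub_cancel] using hv _ (hmem t ht))
  rwa [intervalIntegral.integral_comp_sub_left (fun x ↦ (v x ^ 2)⁻¹), sub_zero,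
    sub_sub_cancel] at h

theorem mul_sqrt_mul_exp_neg_le {C d J ℓ : ℝ} (hd : 0 < d) (hℓ : 0 ≤ ℓ)
    (h : C ^ 2 * ℓ / d ^ 2 ≤ Real.exp (2 * J)) : C * √ℓ * Real.exp (-J) ≤ d := by
  refine le_of_abs_le (abs_le_of_sq_le_sq ?_ hd.le)
  calc (C * √ℓ * Real.exp (-J)) ^ 2 = C ^ 2 * ℓ / Real.exp (2 * J) := by
        rw [mul_pow, mul_pow, Real.sq_sqrt hℓ, Real.exp_neg, inv_pow, ← Real.exp_nat_mul,
          Nat.cast_ofNat, div_eq_mul_inv]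
    _ ≤ d ^ 2 := (div_le_comm₀ (by positivity) (by positivity)).1 h

theorem stmt_9_general {a b C x₀ : ℝ} {v : ℝ → ℝ}
    (hint : IntervalIntegrable (fun x ↦ (v x ^ 2)⁻¹) volume a b)
    (hpos : ∀ x ∈ Icc a b, 0 < v x) (hx₀ : x₀ ∈ Icc a b)
    (hHolder : ∀ x ∈ Icc a b, v x ≤ v x₀ + C * √|x - x₀|) :
    C * √(b - a) * Real.exp (-(C ^ 2 * ∫ x in a..b, (v x ^ 2)⁻¹)) ≤ v x₀ := by
  have hd : 0 < v x₀ := hpos x₀ hx₀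
  have ha : 0 ≤ x₀ - a := sub_nonneg.2 hx₀.1
  have hb : 0 ≤ b - x₀ := sub_nonneg.2 hx₀.2
  have hsub_left : Icc a x₀ ⊆ Icc a b := Icc_subset_Icc_right hx₀.2
  have hsub_right : Icc x₀ b ⊆ Icc a b := Icc_subset_Icc_left hx₀.1
  obtain ⟨hint_left, hint_right⟩ :=
    (IntervalIntegrable.trans_iff (Icc_subset_uIcc hx₀)).1 hint
  have hleft := one_add_div_le_exp_integral_inv_sq_left hd.ne' hx₀.1 hint_left
    (fun x hx ↦ hpos x (hsub_left hx)) fun x hx ↦ by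
      simpa only [abs_sub_comm x, abs_of_nonneg (sub_nonneg.2 hx.2)] using hHolder x (hsub_left hx)
  have hright := one_add_div_le_exp_integral_inv_sq_right hd.ne' hx₀.2 hint_right
    (fun x hx ↦ hpos x (hsub_right hx)) fun x hx ↦ by
      simpa only [abs_of_nonneg (sub_nonneg.2 hx.1)] using hHolder x (hsub_right hx)
  refine mul_sqrt_mul_exp_neg_le hd (sub_nonneg.2 (hx₀.1.trans hx₀.2)) ?_
  set p := C ^ 2 * (x₀ - a) / v x₀ ^ 2 with hp
  set q := C ^ 2 * (b - x₀) / v x₀ ^ 2 with hq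
  have hp_nonneg : 0 ≤ p := by positivity
  have hq_nonneg : 0 ≤ q := by positivity
  calc C ^ 2 * (b - a) / v x₀ ^ 2 = p + q := by rw [hp, hq]; ring
    _ ≤ (1 + p) * (1 + q) := by linarith [mul_nonneg hp_nonneg hq_nonneg]
    _ ≤ Real.exp (2 * C ^ 2 * ∫ x in a..x₀, (v x ^ 2)⁻¹) *
        Real.exp (2 * C ^ 2 * ∫ x in x₀..b, (v x ^ 2)⁻¹) :=
      mul_le_mul hleft hright (by positivity) (Real.exp_nonneg _)
    _ = Real.exp (2 * (C ^ 2 * ∫ x in a..b, (v x ^ 2)⁻¹)) := by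
      rw [← Real.exp_add, ← mul_add,
        intervalIntegral.integral_add_adjacent_intervals hint_left hint_right, mul_assoc]

/-- Positivity lower bound of Section 6: if `v : [0,L] → (0,∞)` is continuous, attains
its minimum `δ = v x₀`, satisfies `v x ≤ δ + C|x−x₀|^{1/2}` on `[0,L]`, and
`ε ∫₀ᴸ v⁻² ≤ K`, then `δ ≥ C √(L/2) exp(−C²K/ε)`. -/
theorem stmt_9 (L C ε K : ℝ) (hL : 0 < L) (hC : 0 < C) (hε : 0 < ε) (hK : 0 < K)
    (v : ℝ → ℝ) (hv : ContinuousOn v (Set.Icc 0 L))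
    (hpos : ∀ x ∈ Set.Icc (0 : ℝ) L, 0 < v x)
    (x₀ : ℝ) (hx₀ : x₀ ∈ Set.Icc (0 : ℝ) L)
    (hmin : ∀ x ∈ Set.Icc (0 : ℝ) L, v x₀ ≤ v x)
    (hHolder : ∀ x ∈ Set.Icc (0 : ℝ) L, v x ≤ v x₀ + C * Real.sqrt |x - x₀|)
    (hint : ε * ∫ x in (0:ℝ)..L, ((v x) ^ 2)⁻¹ ≤ K) :
    C * Real.sqrt (L / 2) * Real.exp (-(C ^ 2 * K / ε)) ≤ v x₀ := by
  have hcont : ContinuousOn (fun x ↦ (v x ^ 2)⁻¹) (Icc 0 L) :=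
    (hv.pow 2).inv₀ fun x hx ↦ (pow_pos (hpos x hx) 2).ne'
  calc C * √(L / 2) * Real.exp (-(C ^ 2 * K / ε))
      ≤ C * √(L - 0) * Real.exp (-(C ^ 2 * ∫ x in (0 : ℝ)..L, (v x ^ 2)⁻¹)) := by
        rw [mul_div_assoc, sub_zero]
        gcongr
        exacts [half_le_self hL.le, (le_div_iff₀' hε).2 hint]
    _ ≤ v x₀ :=
        stmt_9_general (hcont.intervalIntegrable_of_Icc hL.le) hpos hx₀ hHolder
end
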